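/- Uniqueness of the extension when the scaling degree is below the space dimension: let k ∈ ℕ and let t, t' be tempered distributions on ℝᵏ which agree away from the origin. Suppose there exist real numbers r < k and r' < k such that for every Schwartz function φ: lim_{ρ↓0} ρ^{r−k} t(φ_ρ) = 0 and lim_{ρ↓0} ρ^{r'−k} t'(φ_ρ) = 0 (i.e. the Steinmann scaling degrees of t and t' are below k). Then t = t'. -/

import Mathlib

/-!
The difference `u = t - t'` annihilates every Schwartz function vanishing near `0`, and
`u (φ_ρ) → 0` as `ρ ↓ 0` for every `φ`, because `ρ ^ (r - k)` is bounded below near `0` when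
`r < k`. These two facts force `u = 0`; the classification of distributions supported at a point
is not needed.

By continuity `u` is bounded by finitely many Schwartz seminorms, say with derivatives of order at
most `N`. If all derivatives of `φ` of order less than `2 N + 2` vanish at `0`, then `u φ = 0`:
for a cutoff `χ` equal to `1` near `0` one has `u φ = u (χ(c ·) φ)` for all `c ≥ 1`, and the
relevant seminorms of `χ(c ·) φ` are `O(1 / c)` (`seminorm_cutoff_le`, `eq_zero_of_vanishesTo`).

The required order of vanishing is then lowered one step at a time. If the derivatives of `φ` of
order less than `m` vanish at `0`, then those of `φ(2 ·) - 2 ^ m φ` of order at most `m` vanish at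
`0`, so `u (φ(2 ·)) = 2 ^ m u φ`. Iterating, `u (φ(2 ^ n ·)) = 2 ^ (m n) u φ`, whose left side
tends to `0` as `n → ∞`; hence `u φ = 0`. At `m = 0` this holds for all `φ`.
-/

noncomputable section
open Filter Topology Finset

/-- Tempered distributions on `ℝᵏ`: continuous `ℂ`-linear maps `𝓢(ℝᵏ, ℂ) → ℂ`. -/
abbrev TemperedDist (k : ℕ) := SchwartzMap (Fin k → ℝ) ℂ →L[ℂ] ℂ

/-- For `ρ ≠ 0`, the Schwartz function `φ_ρ : x ↦ φ(x/ρ)` (junk value `φ` for `ρ = 0`;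
it is only ever used for `ρ > 0`). -/
noncomputable def dilateSM {k : ℕ} (ρ : ℝ) (φ : SchwartzMap (Fin k → ℝ) ℂ) :
    SchwartzMap (Fin k → ℝ) ℂ :=
  if h : ρ ≠ 0 then
    SchwartzMap.compCLMOfContinuousLinearEquiv ℂ
      ((LinearEquiv.smulOfNeZero ℝ (Fin k → ℝ) ρ⁻¹ (inv_ne_zero h)).toContinuousLinearEquiv) φ
  else φ

/-- `t` and `t'` agree away from the origin: `t(φ) = t'(φ)` for every Schwartz `φ`
vanishing on some neighborhood of `0`. -/
def AgreeAwayFromOrigin (k : ℕ) (t t' : TemperedDist k) : Prop :=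
  ∀ φ : SchwartzMap (Fin k → ℝ) ℂ,
    (∃ U ∈ 𝓝 (0 : Fin k → ℝ), ∀ x ∈ U, φ x = 0) → t φ = t' φ

/-- A tempered distribution `t` scales almost homogeneously with degree `w` and some
finite power: for every Schwartz `φ` there are constants `c_j(φ)`, `c_0(φ) = t(φ)`,
with `ρ^{w-k} t(φ_ρ) = Σ_{j<N} (log ρ)^j c_j(φ)` for all `ρ > 0`. -/
def ScalesAlmostHomogeneously (k : ℕ) (w : ℂ) (t : TemperedDist k) : Prop :=
  ∃ N : ℕ, 1 ≤ N ∧ ∀ φ : SchwartzMap (Fin k → ℝ) ℂ, ∃ c : ℕ → ℂ, c 0 = t φ ∧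
    ∀ ρ : ℝ, 0 < ρ →
      Complex.exp ((w - (k : ℂ)) * Real.log ρ) * t (dilateSM ρ φ)
        = ∑ j ∈ Finset.range N, (Real.log ρ : ℂ) ^ j * c j

/-- All derivatives of `φ` of order strictly less than `m` vanish at the origin. -/
def VanishesTo {k : ℕ} (m : ℕ) (φ : SchwartzMap (Fin k → ℝ) ℂ) : Prop :=
  ∀ j < m, iteratedFDeriv ℝ j φ 0 = 0

lemma dilateSM_inv_apply {k : ℕ} {c : ℝ} (hc : c ≠ 0) (φ : SchwartzMap (Fin k → ℝ) ℂ)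
    (x : Fin k → ℝ) : dilateSM c⁻¹ φ x = φ (c • x) := by
  have h : c⁻¹ ≠ 0 := inv_ne_zero hc
  rw [dilateSM, dif_pos h, SchwartzMap.compCLMOfContinuousLinearEquiv_apply]
  change φ ((c⁻¹)⁻¹ • x) = φ (c • x)
  rw [inv_inv]

lemma iteratedFDeriv_dilateSM_inv {k : ℕ} {c : ℝ} (hc : c ≠ 0) (φ : SchwartzMap (Fin k → ℝ) ℂ)
    (j : ℕ) (x : Fin k → ℝ) :
    iteratedFDeriv ℝ j (dilateSM c⁻¹ φ) x = c ^ j • iteratedFDeriv ℝ j φ (c • x) := by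
  have h : (dilateSM c⁻¹ φ : (Fin k → ℝ) → ℂ) = fun z => φ (c • z) :=
    funext fun x => dilateSM_inv_apply hc φ x
  rw [h, iteratedFDeriv_comp_const_smul c (mod_cast φ.smooth j)]

/-- Taylor-type estimate, by iterating the mean value inequality from order `j + p` down to
order `j`. -/
lemma exists_norm_iteratedFDeriv_le_pow {k : ℕ} (φ : SchwartzMap (Fin k → ℝ) ℂ) (p : ℕ) :
    ∀ j : ℕ, VanishesTo (j + p) φ →
      ∃ C : ℝ, 0 ≤ C ∧ ∀ x, ‖iteratedFDeriv ℝ j φ x‖ ≤ C * ‖x‖ ^ p := by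
  induction p with
  | zero =>
    intro j _
    exact ⟨SchwartzMap.seminorm ℝ 0 j φ, apply_nonneg _ _, fun x => by
      simpa using φ.norm_iteratedFDeriv_le_seminorm ℝ j x⟩
  | succ p ih =>
    intro j hj
    obtain ⟨C, hC, h⟩ := ih (j + 1) (by rwa [add_assoc, add_comm 1 p])
    refine ⟨C, hC, fun x => ?_⟩
    have hd : Differentiable ℝ (iteratedFDeriv ℝ j φ) :=
      (φ.smooth (j + 1 : ℕ)).differentiable_iteratedFDeriv (by exact_mod_cast Nat.lt_succ_self j)
    have := (convex_closedBall (0 : Fin k → ℝ) ‖x‖).norm_image_sub_le_of_norm_fderiv_le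
      (𝕜 := ℝ) (f := iteratedFDeriv ℝ j φ) (C := C * ‖x‖ ^ p) (x := 0) (y := x)
      (fun y _ => hd y)
      (fun y hy => by
        rw [norm_fderiv_iteratedFDeriv]
        refine (h y).trans ?_
        have : ‖y‖ ≤ ‖x‖ := by simpa using hy
        gcongr)
      (by simp) (by simp)
    rw [hj j (by omega)] at this
    simpa [pow_succ, mul_assoc] using this

/-- A Schwartz cutoff: `1` on the unit ball and supported in the ball of radius `2`. -/
lemma exists_cutoff (k : ℕ) : ∃ χ : SchwartzMap (Fin k → ℝ) ℂ,
    (∀ x, ‖x‖ ≤ 1 → χ x = 1) ∧ ∀ x, 2 ≤ ‖x‖ → χ x = 0 := by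
  let b : ContDiffBump (0 : Fin k → ℝ) := ⟨1, 2, one_pos, one_lt_two⟩
  have h₁ : HasCompactSupport (fun x => ((b x : ℝ) : ℂ)) :=
    b.hasCompactSupport.comp_left (g := fun r : ℝ => (r : ℂ)) (by simp)
  have h₂ : ContDiff ℝ ((⊤ : ℕ∞) : WithTop ℕ∞) (fun x => ((b x : ℝ) : ℂ)) :=
    Complex.ofRealCLM.contDiff.comp b.contDiff
  refine ⟨h₁.toSchwartzMap h₂, fun x hx => ?_, fun x hx => ?_⟩
  · change ((b x : ℝ) : ℂ) = 1
    rw [b.one_of_mem_closedBall (by simpa [b] using hx)]; simp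
  · change ((b x : ℝ) : ℂ) = 0
    rw [b.zero_of_le_dist (by simpa [b] using hx)]; simp

/-- The product `χ(c ·) φ`. -/
def cutoffMul {k : ℕ} (χ φ : SchwartzMap (Fin k → ℝ) ℂ) (c : ℝ) : SchwartzMap (Fin k → ℝ) ℂ :=
  SchwartzMap.smulLeftCLM ℂ (dilateSM c⁻¹ χ) φ

lemma cutoffMul_apply {k : ℕ} (χ φ : SchwartzMap (Fin k → ℝ) ℂ) {c : ℝ} (hc : c ≠ 0)
    (x : Fin k → ℝ) : cutoffMul χ φ c x = χ (c • x) * φ x := by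
  rw [cutoffMul, SchwartzMap.smulLeftCLM_apply_apply (SchwartzMap.hasTemperateGrowth _),
    dilateSM_inv_apply hc, smul_eq_mul]

/-- Each derivative falling on `χ(c ·)` costs a factor `c`, at most `c ^ N` in total, whereas on the
support `‖x‖ ≤ 2 / c` the derivatives of `φ` of order at most `N` are `O(c ^ (-(N + 1)))`. -/
lemma seminorm_cutoff_le {k : ℕ} {χ φ : SchwartzMap (Fin k → ℝ) ℂ}
    (hχ : ∀ x, 2 ≤ ‖x‖ → χ x = 0) {N : ℕ} (hφ : VanishesTo (2 * N + 2) φ) (l n : ℕ) (hn : n ≤ N) :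
    ∃ C : ℝ, ∀ c : ℝ, 1 ≤ c → SchwartzMap.seminorm ℂ l n (cutoffMul χ φ c) ≤ C / c := by
  have hT : ∀ j : ℕ, ∃ C : ℝ, 0 ≤ C ∧ (j ≤ N → ∀ x, ‖iteratedFDeriv ℝ j φ x‖ ≤ C * ‖x‖ ^ (N + 1)) := by
    intro j
    by_cases hj : j ≤ N
    · obtain ⟨C, hC, h⟩ := exists_norm_iteratedFDeriv_le_pow φ (N + 1) j
        (fun i hi => hφ i (by omega))
      exact ⟨C, hC, fun _ => h⟩
    · exact ⟨0, le_rfl, fun h => absurd h hj⟩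
  choose B hB0 hB using hT
  let A : ℕ → ℝ := fun i => SchwartzMap.seminorm ℝ 0 i χ
  have hA0 : ∀ i, 0 ≤ A i := fun i => apply_nonneg _ _
  let S : ℝ := ∑ i ∈ Finset.range (n + 1), (n.choose i : ℝ) * A i * B (n - i)
  have hS0 : 0 ≤ S := Finset.sum_nonneg fun i _ =>
    mul_nonneg (mul_nonneg (Nat.cast_nonneg _) (hA0 i)) (hB0 _)
  refine ⟨2 ^ l * (S * 2 ^ (N + 1)), fun c hc => ?_⟩
  have hc0 : 0 < c := by linarith
  refine SchwartzMap.seminorm_le_bound ℂ l n _ (by positivity) fun x => ?_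
  by_cases hx : ‖x‖ ≤ 2 / c
  · have hx2 : ‖x‖ ≤ 2 := hx.trans (div_le_self (by norm_num) hc)
    have hfun : (cutoffMul χ φ c : (Fin k → ℝ) → ℂ) = fun y => dilateSM c⁻¹ χ y * φ y := by
      funext y
      rw [cutoffMul_apply _ _ hc0.ne', dilateSM_inv_apply hc0.ne']
    have key : ‖iteratedFDeriv ℝ n (cutoffMul χ φ c) x‖ ≤ S * (2 ^ (N + 1) / c) := by
      rw [hfun]
      refine (norm_iteratedFDeriv_mul_le ((dilateSM c⁻¹ χ).smooth n) (φ.smooth n) x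
        (n := n) le_rfl).trans ?_
      rw [Finset.sum_mul]
      refine Finset.sum_le_sum fun i hi => ?_
      have hi' : i ≤ n := by simpa [Nat.lt_succ_iff] using hi
      have h1 : ‖iteratedFDeriv ℝ i (dilateSM c⁻¹ χ) x‖ ≤ c ^ N * A i := by
        rw [iteratedFDeriv_dilateSM_inv hc0.ne', norm_smul, norm_pow, Real.norm_of_nonneg hc0.le]
        exact mul_le_mul (pow_le_pow_right₀ hc (hi'.trans hn))
          (χ.norm_iteratedFDeriv_le_seminorm ℝ i _) (norm_nonneg _) (by positivity)
      have h2 : ‖iteratedFDeriv ℝ (n - i) φ x‖ ≤ B (n - i) * (2 / c) ^ (N + 1) :=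
        (hB (n - i) (by omega) x).trans (by have := hB0 (n - i); gcongr)
      have h3 : 0 ≤ c ^ N * A i := mul_nonneg (by positivity) (hA0 i)
      calc (n.choose i : ℝ) * ‖iteratedFDeriv ℝ i (dilateSM c⁻¹ χ) x‖
            * ‖iteratedFDeriv ℝ (n - i) φ x‖
          ≤ (n.choose i : ℝ) * (c ^ N * A i) * (B (n - i) * (2 / c) ^ (N + 1)) := by gcongr
        _ = (n.choose i : ℝ) * A i * B (n - i) * (2 ^ (N + 1) / c) := by
            rw [div_pow, pow_succ c]; field_simp
    calc ‖x‖ ^ l * ‖iteratedFDeriv ℝ n (cutoffMul χ φ c) x‖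
        ≤ 2 ^ l * (S * (2 ^ (N + 1) / c)) := by gcongr
      _ = _ := by ring
  · -- Outside the ball of radius `2 / c` the product vanishes identically, hence so do its
    -- derivatives.
    have hsup : tsupport (cutoffMul χ φ c) ⊆ Metric.closedBall 0 (2 / c) := by
      refine closure_minimal (fun y hy => ?_) Metric.isClosed_closedBall
      by_contra hy'
      refine hy ?_
      have : 2 / c < ‖y‖ := by simpa using hy'
      rw [cutoffMul_apply _ _ hc0.ne', hχ, zero_mul]
      rw [norm_smul, Real.norm_of_nonneg hc0.le]
      rw [div_lt_iff₀ hc0] at this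
      linarith
    have h0 : iteratedFDeriv ℝ n (cutoffMul χ φ c) x = 0 := by
      by_contra h
      exact hx (by simpa using hsup (support_iteratedFDeriv_subset n h))
    rw [h0]
    simp only [norm_zero, mul_zero]
    positivity

/-- A tempered distribution supported at the origin annihilates Schwartz functions vanishing to
sufficiently high order there. -/
lemma eq_zero_of_vanishesTo {k : ℕ} (u : TemperedDist k)
    (hu : ∀ φ : SchwartzMap (Fin k → ℝ) ℂ,
      (∃ U ∈ 𝓝 (0 : Fin k → ℝ), ∀ x ∈ U, φ x = 0) → u φ = 0) :
    ∃ M : ℕ, ∀ φ, VanishesTo M φ → u φ = 0 := by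
  obtain ⟨s, C, -, hC⟩ := Seminorm.bound_of_continuous
    (schwartz_withSeminorms ℂ (Fin k → ℝ) ℂ) ((normSeminorm ℂ ℂ).comp u.toLinearMap)
    (continuous_norm.comp u.continuous)
  have hbound : ∀ φ, ‖u φ‖ ≤ C * (s.sup (schwartzSeminormFamily ℂ (Fin k → ℝ) ℂ)) φ :=
    fun φ => hC φ
  let N := s.sup Prod.snd
  refine ⟨2 * N + 2, fun φ hφ => ?_⟩
  obtain ⟨χ, hχ1, hχ0⟩ := exists_cutoff k
  have hcut : ∀ c : ℝ, 1 ≤ c → u φ = u (cutoffMul χ φ c) := by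
    intro c hc
    have hc0 : 0 < c := by linarith
    rw [← sub_eq_zero, ← map_sub]
    refine hu _ ⟨Metric.closedBall 0 c⁻¹, Metric.closedBall_mem_nhds _ (by positivity), ?_⟩
    intro x hx
    have hx' : ‖x‖ ≤ c⁻¹ := by simpa using hx
    rw [sub_apply, cutoffMul_apply _ _ hc0.ne', hχ1, one_mul, sub_self]
    rw [norm_smul, Real.norm_of_nonneg hc0.le]
    calc c * ‖x‖ ≤ c * c⁻¹ := by gcongr
      _ = 1 := mul_inv_cancel₀ hc0.ne'
  have hex : ∀ i : ℕ × ℕ, ∃ D : ℝ, i ∈ s → ∀ c : ℝ, 1 ≤ c →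
      SchwartzMap.seminorm ℂ i.1 i.2 (cutoffMul χ φ c) ≤ D / c := by
    intro i
    by_cases hi : i ∈ s
    · obtain ⟨D, hD⟩ := seminorm_cutoff_le hχ0 hφ i.1 i.2 (Finset.le_sup (f := Prod.snd) hi)
      exact ⟨D, fun _ => hD⟩
    · exact ⟨0, fun h => absurd h hi⟩
  choose D hD using hex
  let E : ℝ := ∑ i ∈ s, |D i|
  have hE0 : 0 ≤ E := Finset.sum_nonneg fun i _ => abs_nonneg _
  have hle : ∀ c : ℝ, 1 ≤ c → ‖u φ‖ ≤ C * (E / c) := by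
    intro c hc
    have hc0 : 0 < c := by linarith
    rw [hcut c hc]
    refine (hbound _).trans ?_
    gcongr
    refine Seminorm.finset_sup_apply_le (by positivity) fun i hi => ?_
    refine (hD i hi c hc).trans ?_
    gcongr
    exact (le_abs_self _).trans
      (Finset.single_le_sum (f := fun i => |D i|) (fun i _ => abs_nonneg _) hi)
  have hlim : Tendsto (fun c : ℝ => (C : ℝ) * (E / c)) atTop (𝓝 0) := by
    simpa using (tendsto_const_nhds (x := E)).div_atTop tendsto_id |>.const_mul (C : ℝ)
  have : ‖u φ‖ ≤ 0 := ge_of_tendsto hlim ((eventually_ge_atTop 1).mono hle)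
  simpa using this

/-- Lowering the order of vanishing by one: `φ(2 ·) - 2 ^ m φ` vanishes to one order more
than `φ`, so `n ↦ u (φ(2 ^ n ·))` is geometric with ratio `2 ^ m`, yet tends to `0`. -/
lemma eq_zero_step {k : ℕ} (u : TemperedDist k)
    (hlim : ∀ φ, Tendsto (fun ρ : ℝ => u (dilateSM ρ φ)) (𝓝[>] (0 : ℝ)) (𝓝 0)) (m : ℕ)
    (ih : ∀ φ, VanishesTo (m + 1) φ → u φ = 0) :
    ∀ φ, VanishesTo m φ → u φ = 0 := by
  have h2 : (2 : ℝ) ≠ 0 := two_ne_zero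
  have hstep : ∀ φ, VanishesTo m φ → u (dilateSM (2 : ℝ)⁻¹ φ) = 2 ^ m * u φ := by
    intro φ hφ
    rw [← smul_eq_mul, ← map_smul, ← sub_eq_zero, ← map_sub]
    refine ih _ fun j hj => ?_
    have hc : ((dilateSM (2 : ℝ)⁻¹ φ - (2 ^ m : ℂ) • φ : SchwartzMap (Fin k → ℝ) ℂ) :
        (Fin k → ℝ) → ℂ) = dilateSM (2 : ℝ)⁻¹ φ - (2 ^ m : ℂ) • (φ : (Fin k → ℝ) → ℂ) := rfl
    rw [hc, iteratedFDeriv_sub_apply ((dilateSM (2 : ℝ)⁻¹ φ).contDiffAt j)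
      (show ContDiffAt ℝ j ((2 ^ m : ℂ) • (φ : (Fin k → ℝ) → ℂ)) 0 from
        ((2 ^ m : ℂ) • φ).contDiffAt j),
      iteratedFDeriv_const_smul_apply (φ.contDiffAt j), iteratedFDeriv_dilateSM_inv h2, smul_zero]
    rcases Nat.lt_succ_iff_lt_or_eq.mp hj with h | rfl
    · rw [hφ j h]; simp
    · ext v; simp
  have hiter : ∀ n : ℕ, ∀ φ, VanishesTo m φ →
      u (dilateSM ((2 : ℝ) ^ n)⁻¹ φ) = (2 ^ m) ^ n * u φ := by
    intro n
    induction n with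
    | zero =>
      intro φ _
      have : dilateSM ((2 : ℝ) ^ 0)⁻¹ φ = φ := by
        ext x
        rw [dilateSM_inv_apply (by simp)]; simp
      rw [this]; simp
    | succ n ihn =>
      intro φ hφ
      have hv : VanishesTo m (dilateSM (2 : ℝ)⁻¹ φ) := fun j hj => by
        rw [iteratedFDeriv_dilateSM_inv h2, smul_zero, hφ j hj, smul_zero]
      have : dilateSM ((2 : ℝ) ^ (n + 1))⁻¹ φ = dilateSM ((2 : ℝ) ^ n)⁻¹ (dilateSM (2 : ℝ)⁻¹ φ) := by
        ext x
        rw [dilateSM_inv_apply (by positivity), dilateSM_inv_apply (by positivity),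
          dilateSM_inv_apply h2, smul_smul, pow_succ']
      rw [this, ihn _ hv, hstep φ hφ]; ring
  intro φ hφ
  have hseq : Tendsto (fun n : ℕ => ((2 : ℝ) ^ n)⁻¹) atTop (𝓝[>] 0) :=
    (tendsto_inv_atTop_nhdsGT_zero).comp (tendsto_pow_atTop_atTop_of_one_lt one_lt_two)
  have hl := ((hlim φ).comp hseq).norm
  rw [norm_zero] at hl
  have : ‖u φ‖ ≤ 0 := by
    refine ge_of_tendsto' hl fun n => ?_
    simp only [Function.comp_apply]
    rw [hiter n φ hφ, norm_mul, norm_pow, norm_pow, Complex.norm_ofNat]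
    exact le_mul_of_one_le_left (norm_nonneg _) (one_le_pow₀ (one_le_pow₀ one_le_two))
  simpa using this

/-- Scaling degree below the dimension gives plain convergence `t (φ_ρ) → 0`: multiply by
`ρ ^ (k - r) → 0`. -/
lemma tendsto_dilate_of_scaling {k : ℕ} (t : TemperedDist k)
    (hsd : ∃ r : ℝ, r < k ∧ ∀ φ : SchwartzMap (Fin k → ℝ) ℂ,
      Tendsto (fun ρ : ℝ => ((ρ ^ (r - k) : ℝ) : ℂ) * t (dilateSM ρ φ))
        (𝓝[>] (0 : ℝ)) (𝓝 0)) (φ : SchwartzMap (Fin k → ℝ) ℂ) :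
    Tendsto (fun ρ : ℝ => t (dilateSM ρ φ)) (𝓝[>] (0 : ℝ)) (𝓝 0) := by
  obtain ⟨r, hr, h⟩ := hsd
  have h1 : Tendsto (fun ρ : ℝ => ((ρ ^ ((k : ℝ) - r) : ℝ) : ℂ)) (𝓝[>] (0 : ℝ)) (𝓝 0) := by
    have hc : ContinuousAt (fun ρ : ℝ => ρ ^ ((k : ℝ) - r)) 0 :=
      Real.continuousAt_rpow_const _ _ (Or.inr (by linarith))
    have := (Complex.continuous_ofReal.continuousAt.comp hc).tendsto.mono_left
      (nhdsWithin_le_nhds (s := Set.Ioi 0))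
    simpa [Function.comp_def, Real.zero_rpow (sub_pos.mpr hr).ne'] using this
  have h2 := h1.mul (h φ)
  rw [mul_zero] at h2
  refine h2.congr' ?_
  filter_upwards [self_mem_nhdsWithin] with ρ hρ
  rw [← mul_assoc, ← Complex.ofReal_mul, ← Real.rpow_add hρ]
  simp

/-- uniqueness of the extension when the scaling degree is below the
space dimension.  If `t, t'` agree away from the origin and there are `r < k`,
`r' < k` with `lim_{ρ↓0} ρ^{r-k} t(φ_ρ) = 0` and `lim_{ρ↓0} ρ^{r'-k} t'(φ_ρ) = 0`
for every Schwartz `φ`, then `t = t'`. -/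
theorem extension_unique_of_scaling_degree_lt_dim (k : ℕ) (hk : 0 < k)
    (t t' : TemperedDist k) (hagree : AgreeAwayFromOrigin k t t')
    (hsd : ∃ r : ℝ, r < k ∧ ∀ φ : SchwartzMap (Fin k → ℝ) ℂ,
      Tendsto (fun ρ : ℝ => ((ρ ^ (r - k) : ℝ) : ℂ) * t (dilateSM ρ φ))
        (𝓝[>] (0 : ℝ)) (𝓝 0))
    (hsd' : ∃ r' : ℝ, r' < k ∧ ∀ φ : SchwartzMap (Fin k → ℝ) ℂ,
      Tendsto (fun ρ : ℝ => ((ρ ^ (r' - k) : ℝ) : ℂ) * t' (dilateSM ρ φ))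
        (𝓝[>] (0 : ℝ)) (𝓝 0)) :
    t = t' := by
  have hlim : ∀ φ, Tendsto (fun ρ : ℝ => (t - t') (dilateSM ρ φ)) (𝓝[>] (0 : ℝ)) (𝓝 0) := by
    intro φ
    simpa using (tendsto_dilate_of_scaling t hsd φ).sub (tendsto_dilate_of_scaling t' hsd' φ)
  obtain ⟨M, hM⟩ := eq_zero_of_vanishesTo (t - t') fun φ hφ => by
    simpa [sub_eq_zero] using hagree φ hφ
  have hdown : ∀ m : ℕ, (∀ φ, VanishesTo m φ → (t - t') φ = 0) →
      ∀ φ, VanishesTo 0 φ → (t - t') φ = 0 := by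
    intro m
    induction m with
    | zero => exact id
    | succ m ih => exact fun h => ih (eq_zero_step (t - t') hlim m h)
  ext φ
  have := hdown M hM φ fun j hj => absurd hj (Nat.not_lt_zero j)
  simpa [sub_eq_zero] using this
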